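/- Let p : A → B be a surjective homomorphism of abelian groups, K a subgroup of B, and Φ : B → ℤ a function. Regard the group of all functions Λ → ℤ on an abelian group Λ as a module over the group ring ℤ[Λ], where a finitely supported function f acts by convolution: (f • Φ)(λ) = Σ_{μ ∈ supp f} f(μ) · Φ(λ − μ). Then Φ belongs to the ℤ[B]-submodule of functions B → ℤ generated by the functions supported in K if and only if the pullback Φ ∘ p belongs to the ℤ[A]-submodule of functions A → ℤ generated by the functions supported in p⁻¹(K). -/

import Mathlib

/-- The convolution action of the group ring `ℤ[Λ]` (finitely supported functions
`Λ →₀ ℤ`) on the module of all functions `Λ → ℤ`: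
`(f • Φ) λ = Σ_{μ ∈ supp f} f μ * Φ (λ - μ)`. -/
def convSMul {Λ : Type*} [AddCommGroup Λ] (f : Λ →₀ ℤ) (Φ : Λ → ℤ) : Λ → ℤ :=
  fun l => ∑ μ ∈ f.support, f μ * Φ (l - μ)

/-- The `ℤ[Λ]`-submodule of functions `Λ → ℤ` generated by the functions whose
support is contained in `s`, realized as the additive subgroup generated by all
convolutions `f • Ψ` with `Ψ` supported in `s`. -/
def convSpan {Λ : Type*} [AddCommGroup Λ] (s : Set Λ) : AddSubgroup (Λ → ℤ) :=
  AddSubgroup.closure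
    {g | ∃ (f : Λ →₀ ℤ) (Ψ : Λ → ℤ), Function.support Ψ ⊆ s ∧ g = convSMul f Ψ}

/-!
A function lies in `convSpan s` exactly when its support is covered by finitely many translates of
`s`. Such covers pass both ways along a surjection `p`, because
`p ⁻¹' (p '' T + s) = T + p ⁻¹' s` and every finite subset of the target is the image `p '' T` of
a finite set `T`.
-/

open Function
open scoped Pointwise

section ConvSpan

variable {Λ : Type*} [AddCommGroup Λ] {s T : Set Λ} {F : Λ → ℤ}

theorem convSMul_single_one (t : Λ) (Ψ : Λ → ℤ) :
    convSMul (Finsupp.single t 1) Ψ = fun l => Ψ (l - t) := by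
  funext l
  simp [convSMul]

theorem support_convSMul_subset (f : Λ →₀ ℤ) (Ψ : Λ → ℤ) :
    support (convSMul f Ψ) ⊆ (f.support : Set Λ) + support Ψ := by
  intro l hl
  obtain ⟨t, ht, hne⟩ := Finset.exists_ne_zero_of_sum_ne_zero hl
  exact ⟨t, ht, l - t, right_ne_zero_of_mul hne, add_sub_cancel t l⟩

theorem mem_convSpan_of_support_subset_vadd {t : Λ} (hF : support F ⊆ t +ᵥ s) :
    F ∈ convSpan s := by
  refine AddSubgroup.subset_closure ⟨Finsupp.single t 1, fun l => F (t + l), fun l hl => ?_, ?_⟩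
  · exact Set.vadd_mem_vadd_set_iff.mp (hF hl)
  · simp only [convSMul_single_one, add_sub_cancel]

theorem mem_convSpan_of_support_subset_add (hT : T.Finite) (hF : support F ⊆ T + s) :
    F ∈ convSpan s := by
  induction T, hT using Set.Finite.induction_on generalizing F with
  | empty =>
    rw [Set.empty_add, Set.subset_empty_iff, support_eq_empty_iff] at hF
    exact hF ▸ zero_mem _
  | @insert t T _ _ ih =>
    have cover : support F ⊆ (t +ᵥ s) ∪ (T + s) := by
      rwa [Set.insert_eq, Set.union_add, Set.singleton_add] at hF
    rw [← Set.indicator_self_add_compl (t +ᵥ s) F]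
    refine add_mem (mem_convSpan_of_support_subset_vadd Set.support_indicator_subset) (ih ?_)
    rw [Set.support_indicator]
    rintro l ⟨hlt, hl⟩
    exact (cover hl).resolve_left hlt

theorem exists_finite_support_subset_add_of_mem_convSpan (hF : F ∈ convSpan s) :
    ∃ T : Set Λ, T.Finite ∧ support F ⊆ T + s := by
  induction hF using AddSubgroup.closure_induction with
  | mem _ hx =>
    obtain ⟨f, Ψ, hΨ, rfl⟩ := hx
    exact ⟨f.support, f.support.finite_toSet,
      (support_convSMul_subset f Ψ).trans (Set.add_subset_add_left hΨ)⟩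
  | zero => exact ⟨∅, Set.finite_empty, by simp⟩
  | add F G _ _ hF hG =>
    obtain ⟨T, hT, hFT⟩ := hF
    obtain ⟨U, hU, hGU⟩ := hG
    refine ⟨T ∪ U, hT.union hU, (support_add F G).trans ?_⟩
    rw [Set.union_add]
    exact Set.union_subset_union hFT hGU
  | neg F _ hF => rwa [support_neg]

theorem mem_convSpan_iff_exists_finite_support_subset_add :
    F ∈ convSpan s ↔ ∃ T : Set Λ, T.Finite ∧ support F ⊆ T + s :=
  ⟨exists_finite_support_subset_add_of_mem_convSpan,
    fun ⟨_, hT, hF⟩ => mem_convSpan_of_support_subset_add hT hF⟩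

end ConvSpan

theorem preimage_image_add {A B : Type*} [AddGroup A] [AddMonoid B] (p : A →+ B)
    (T : Set A) (s : Set B) : p ⁻¹' (p '' T + s) = T + p ⁻¹' s := by
  ext a
  constructor
  · rintro ⟨_, ⟨t, ht, rfl⟩, k, hk, hka : p t + k = p a⟩
    have hpk : p (-t + a) = k := by
      rw [map_add, ← hka, ← add_assoc, ← map_add, neg_add_cancel, map_zero, zero_add]
    exact ⟨t, ht, -t + a, Set.mem_preimage.mpr (hpk ▸ hk), add_neg_cancel_left t a⟩
  · rintro ⟨t, ht, k, hk, rfl⟩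
    exact ⟨p t, Set.mem_image_of_mem p ht, p k, hk, (map_add p t k).symm⟩

theorem mem_convSpan_iff_pullback_mem_convSpan_general
    {A B : Type*} [AddCommGroup A] [AddCommGroup B]
    (p : A →+ B) (hp : Surjective p) (s : Set B) (Φ : B → ℤ) :
    Φ ∈ convSpan s ↔ Φ ∘ p ∈ convSpan (p ⁻¹' s) := by
  have lift_cover (T : Set A) : support Φ ⊆ p '' T + s ↔ support (Φ ∘ p) ⊆ T + p ⁻¹' s := by
    rw [support_comp_eq_preimage, ← preimage_image_add, hp.preimage_subset_preimage_iff]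
  simp only [mem_convSpan_iff_exists_finite_support_subset_add, ← lift_cover]
  simpa [hp.range_eq] using
    Set.exists_subset_image_finite_and (f := p) (s := Set.univ) (p := (support Φ ⊆ · + s))

/-- For a surjective homomorphism `p : A → B` of abelian groups and a subgroup
`K ≤ B`, a function `Φ : B → ℤ` lies in the `ℤ[B]`-submodule generated by the
functions supported in `K` if and only if its pullback `Φ ∘ p` lies in the
`ℤ[A]`-submodule generated by the functions supported in `p⁻¹(K)`. -/
theorem mem_convSpan_iff_pullback_mem_convSpan
    (A B : Type*) [AddCommGroup A] [AddCommGroup B]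
    (p : A →+ B) (hp : Function.Surjective p)
    (K : AddSubgroup B) (Φ : B → ℤ) :
    Φ ∈ convSpan (K : Set B) ↔
      (Φ ∘ p) ∈ convSpan ((K.comap p : AddSubgroup A) : Set A) :=
  mem_convSpan_iff_pullback_mem_convSpan_general p hp K Φ
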